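/- arXiv:2111.03247 — 3 statements merged into one kernel-verified Lean document; each statement's English description precedes it below -/
import Mathlib

section
/- Let ν be a probability distribution on a finite set Ω, let f : Ω → ℝ, and let Γ ≥ 0 and σ > 0 be such that for all γ ∈ [0,Γ], Ent_ν[e^{γf}] ≤ (γ²σ²/2)·E_ν[e^{γf}]. Then for all γ ∈ [0,Γ], log E_ν[ e^{γ(f − E_ν[f])} ] ≤ γ²σ²/2. Consequently, for all t ≥ 0: if t ≤ Γ·σ² then P_ν( f > E_ν[f] + t ) ≤ e^{−t²/(2σ²)}, and if t > Γ·σ² then P_ν( f > E_ν[f] + t ) ≤ e^{Γ²σ²/2}·e^{−Γt}. -/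
/-!
Write `M γ = E[exp (γ f)]` and `L = log M`. Since `Ent[exp (γ f)] = γ M' γ - M γ L γ`, the entropy
bound divided by `M γ` reads `γ L' γ - L γ ≤ γ² σ² / 2`, which says that
`γ ↦ L γ / γ - γ σ² / 2` is nonincreasing on `(0, Γ]`. Its limit at `0⁺` is `L' 0 = E[f]`, hence
`L γ ≤ γ E[f] + γ² σ² / 2` (`log_expect_exp_le`). The tail bounds are the Chernoff bound
(`tail_le_exp`) at `γ = t / σ²` when that lies in `[0, Γ]`, and at `γ = Γ` otherwise.
-/

open Finset

noncomputable section
attribute [local instance] Classical.propDecidable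

/-- Mean of `f` under a distribution `ν` on a finite set. -/
def expect {Ω : Type*} [Fintype Ω] (ν : Ω → ℝ) (f : Ω → ℝ) : ℝ :=
  ∑ x, ν x * f x

/-- Entropy functional `Ent_ν[g] = E_ν[g log g] − E_ν[g] log E_ν[g]`. -/
def entFun {Ω : Type*} [Fintype Ω] (ν : Ω → ℝ) (g : Ω → ℝ) : ℝ :=
  expect ν (fun x => g x * Real.log (g x)) -
    expect ν g * Real.log (expect ν g)

theorem expect_exp_pos {Ω : Type*} [Fintype Ω] {ν : Ω → ℝ}
    (hν₀ : ∀ x, 0 ≤ ν x) (hν₁ : ∑ x, ν x = 1) (g : Ω → ℝ) :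
    0 < expect ν (fun x => Real.exp (g x)) := by
  have hne : ∃ x ∈ (univ : Finset Ω), ν x ≠ 0 := by
    apply Finset.exists_ne_zero_of_sum_ne_zero
    rw [hν₁]
    exact one_ne_zero
  obtain ⟨x, hx, hx0⟩ := hne
  exact Finset.sum_pos' (fun y _ => mul_nonneg (hν₀ y) (Real.exp_pos _).le)
    ⟨x, hx, mul_pos (lt_of_le_of_ne (hν₀ x) (Ne.symm hx0)) (Real.exp_pos _)⟩

theorem hasDerivAt_expect_exp {Ω : Type*} [Fintype Ω] (ν f : Ω → ℝ) (γ : ℝ) :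
    HasDerivAt (fun s => expect ν (fun x => Real.exp (s * f x)))
      (expect ν (fun x => Real.exp (γ * f x) * f x)) γ := by
  unfold _root_.expect
  apply HasDerivAt.fun_sum
  intro x _
  have h : HasDerivAt (fun s : ℝ => s * f x) (f x) γ := by
    simpa using (hasDerivAt_id γ).mul_const (f x)
  exact h.exp.const_mul (ν x)

theorem expect_exp_centered {Ω : Type*} [Fintype Ω] (ν f : Ω → ℝ) (γ m : ℝ) :
    expect ν (fun x => Real.exp (γ * (f x - m))) =
      expect ν (fun x => Real.exp (γ * f x)) * Real.exp (-(γ * m)) := by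
  unfold _root_.expect
  rw [Finset.sum_mul]
  refine Finset.sum_congr rfl fun x _ => ?_
  rw [mul_assoc, ← Real.exp_add]
  ring_nf

theorem entFun_exp {Ω : Type*} [Fintype Ω] (ν f : Ω → ℝ) (γ : ℝ) :
    entFun ν (fun x => Real.exp (γ * f x)) =
      γ * expect ν (fun x => Real.exp (γ * f x) * f x) -
        expect ν (fun x => Real.exp (γ * f x)) *
          Real.log (expect ν (fun x => Real.exp (γ * f x))) := by
  unfold entFun
  congr 1
  unfold _root_.expect
  rw [Finset.mul_sum]
  refine Finset.sum_congr rfl fun x _ => ?_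
  simp only [Real.log_exp]
  ring

/-- The entropy bound, integrated along `[0, γ]`, yields the uncentered form of the bound on the
log-moment generating function. -/
theorem log_expect_exp_le {Ω : Type*} [Fintype Ω] {ν : Ω → ℝ}
    (hν₀ : ∀ x, 0 ≤ ν x) (hν₁ : ∑ x, ν x = 1) (f : Ω → ℝ) (Γ σ : ℝ)
    (hEnt : ∀ γ : ℝ, γ ∈ Set.Icc 0 Γ →
      entFun ν (fun x => Real.exp (γ * f x)) ≤
        γ ^ 2 * σ ^ 2 / 2 * expect ν (fun x => Real.exp (γ * f x)))
    {γ : ℝ} (hγ : γ ∈ Set.Icc 0 Γ) :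
    Real.log (expect ν (fun x => Real.exp (γ * f x))) ≤
      γ * expect ν f + γ ^ 2 * σ ^ 2 / 2 := by
  set M : ℝ → ℝ := fun s => expect ν (fun x => Real.exp (s * f x)) with hM
  set M' : ℝ → ℝ := fun s => expect ν (fun x => Real.exp (s * f x) * f x) with hM'
  have hpos : ∀ s, 0 < M s := fun s => expect_exp_pos hν₀ hν₁ _
  have hL : ∀ s, HasDerivAt (fun s => Real.log (M s)) (M' s / M s) s := fun s =>
    (hasDerivAt_expect_exp ν f s).log (hpos s).ne'
  have hM0 : M 0 = 1 := by simp [hM, _root_.expect, hν₁]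
  have hM'0 : M' 0 = expect ν f := by simp [hM', _root_.expect]
  change Real.log (M γ) ≤ _
  rcases hγ.1.eq_or_lt with h0 | h0
  · subst h0
    simp [hM0]
  have hK : ∀ s, s ≠ 0 → HasDerivAt (fun s => Real.log (M s) / s - s * (σ ^ 2 / 2))
      ((M' s / M s * s - Real.log (M s) * 1) / s ^ 2 - 1 * (σ ^ 2 / 2)) s := fun s hs =>
    ((hL s).div (hasDerivAt_id s) hs).sub ((hasDerivAt_id s).mul_const _)
  have hanti : AntitoneOn (fun s => Real.log (M s) / s - s * (σ ^ 2 / 2)) (Set.Ioc 0 Γ) := by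
    apply antitoneOn_of_deriv_nonpos (convex_Ioc 0 Γ)
    · intro s hs
      exact (hK s hs.1.ne').continuousAt.continuousWithinAt
    · intro s hs
      rw [interior_Ioc] at hs
      exact (hK s hs.1.ne').differentiableAt.differentiableWithinAt
    · intro s hs
      rw [interior_Ioc] at hs
      rw [(hK s hs.1.ne').deriv]
      have h := hEnt s ⟨hs.1.le, hs.2.le⟩
      rw [entFun_exp] at h
      change s * M' s - M s * Real.log (M s) ≤ s ^ 2 * σ ^ 2 / 2 * M s at h
      have hs2 : 0 < s ^ 2 := pow_pos hs.1 2
      rw [sub_nonpos, div_le_iff₀ hs2]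
      have hdiv : (s * M' s - M s * Real.log (M s)) / M s ≤ s ^ 2 * σ ^ 2 / 2 := by
        rwa [div_le_iff₀ (hpos s)]
      have heq : (s * M' s - M s * Real.log (M s)) / M s =
          M' s / M s * s - Real.log (M s) * 1 := by
        have := (hpos s).ne'
        field_simp
      linarith
  have hlim : Filter.Tendsto (fun s => Real.log (M s) / s - s * (σ ^ 2 / 2))
      (nhdsWithin 0 (Set.Ioi 0)) (nhds (expect ν f)) := by
    -- As `log (M 0) = 0`, the quotient `log (M s) / s` is the slope of `log ∘ M` at `0`.
    have h1 := (hL 0).tendsto_slope_zero_right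
    simp only [zero_add, hM0, hM'0, Real.log_one, sub_zero, div_one, smul_eq_mul] at h1
    have h2 : Filter.Tendsto (fun s : ℝ => s * (σ ^ 2 / 2)) (nhdsWithin 0 (Set.Ioi 0))
        (nhds 0) := by
      have : Continuous (fun s : ℝ => s * (σ ^ 2 / 2)) := by fun_prop
      simpa using (this.tendsto 0).mono_left nhdsWithin_le_nhds
    simpa [div_eq_inv_mul] using h1.sub h2
  have hle : Real.log (M γ) / γ - γ * (σ ^ 2 / 2) ≤ expect ν f := by
    refine ge_of_tendsto hlim ?_
    filter_upwards [Ioc_mem_nhdsGT h0] with s hs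
    exact hanti ⟨hs.1, hs.2.trans hγ.2⟩ ⟨h0, hγ.2⟩ hs.2
  rw [sub_le_iff_le_add, div_le_iff₀ h0] at hle
  linarith

/-- Chernoff bound. -/
theorem tail_le_exp {Ω : Type*} [Fintype Ω] {ν : Ω → ℝ}
    (hν₀ : ∀ x, 0 ≤ ν x) (f : Ω → ℝ) (m t γ : ℝ) (hγ : 0 ≤ γ) :
    ∑ x ∈ univ.filter (fun x => m + t < f x), ν x ≤
      expect ν (fun x => Real.exp (γ * (f x - m))) * Real.exp (-(γ * t)) := by
  unfold _root_.expect
  rw [Finset.sum_mul, Finset.sum_filter]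
  refine Finset.sum_le_sum fun x _ => ?_
  rw [mul_assoc, ← Real.exp_add]
  split_ifs with h
  · apply le_mul_of_one_le_right (hν₀ x)
    apply Real.one_le_exp
    nlinarith
  · exact mul_nonneg (hν₀ x) (Real.exp_pos _).le

/-- The Herbst argument: an entropy bound on exponential moments
along `γ ∈ [0,Γ]` yields a bound on the log-moment generating function and hence
Gaussian/exponential tail bounds. -/
theorem herbst_argument {Ω : Type*} [Fintype Ω] (ν : Ω → ℝ)
    (hν₀ : ∀ x, 0 ≤ ν x) (hν₁ : ∑ x, ν x = 1)
    (f : Ω → ℝ) (Γ σ : ℝ) (hΓ : 0 ≤ Γ) (hσ : 0 < σ)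
    (hEnt : ∀ γ : ℝ, γ ∈ Set.Icc 0 Γ →
      entFun ν (fun x => Real.exp (γ * f x)) ≤
        γ ^ 2 * σ ^ 2 / 2 * expect ν (fun x => Real.exp (γ * f x))) :
    (∀ γ : ℝ, γ ∈ Set.Icc 0 Γ →
      Real.log (expect ν (fun x => Real.exp (γ * (f x - expect ν f)))) ≤
        γ ^ 2 * σ ^ 2 / 2) ∧
    (∀ t : ℝ, 0 ≤ t →
      (t ≤ Γ * σ ^ 2 →
        ∑ x ∈ univ.filter (fun x => expect ν f + t < f x), ν x ≤
          Real.exp (-t ^ 2 / (2 * σ ^ 2))) ∧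
      (Γ * σ ^ 2 < t →
        ∑ x ∈ univ.filter (fun x => expect ν f + t < f x), ν x ≤
          Real.exp (Γ ^ 2 * σ ^ 2 / 2) * Real.exp (-Γ * t))) := by
  have hlog : ∀ γ : ℝ, γ ∈ Set.Icc 0 Γ →
      Real.log (expect ν (fun x => Real.exp (γ * (f x - expect ν f)))) ≤
        γ ^ 2 * σ ^ 2 / 2 := by
    intro γ hγ
    rw [expect_exp_centered, Real.log_mul (expect_exp_pos hν₀ hν₁ _).ne' (Real.exp_pos _).ne',
      Real.log_exp]
    linarith [log_expect_exp_le hν₀ hν₁ f Γ σ hEnt hγ]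
  have htail : ∀ t γ : ℝ, γ ∈ Set.Icc 0 Γ →
      ∑ x ∈ univ.filter (fun x => expect ν f + t < f x), ν x ≤
        Real.exp (γ ^ 2 * σ ^ 2 / 2) * Real.exp (-(γ * t)) := by
    intro t γ hγ
    refine (tail_le_exp hν₀ f _ t γ hγ.1).trans ?_
    gcongr
    exact (Real.log_le_iff_le_exp (expect_exp_pos hν₀ hν₁ _)).1 (hlog γ hγ)
  refine ⟨hlog, fun t ht => ⟨fun h => ?_, fun _ => ?_⟩⟩
  · have hσ2 : 0 < σ ^ 2 := pow_pos hσ 2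
    -- `γ = t / σ ^ 2` minimizes the exponent `γ ^ 2 * σ ^ 2 / 2 - γ * t`.
    have hb := htail t (t / σ ^ 2) ⟨by positivity, by rwa [div_le_iff₀ hσ2]⟩
    refine hb.trans_eq ?_
    rw [← Real.exp_add]
    congr 1
    field_simp
    ring
  · simpa only [neg_mul] using htail t Γ ⟨hΓ, le_rfl⟩
end
end

section
/- Let Q be a row-stochastic matrix on a finite set Ω, reversible with respect to a probability distribution ν (i.e., ν(x)Q(x,y) = ν(y)Q(y,x) for all x,y). Let f : Ω → ℝ and γ ≥ 0. Then 𝓔_Q(e^{γf}, γf) ≤ γ²·v₁(f)·E_ν[e^{γf}], where v₁(f) := max_{x∈Ω} Σ_{y∈Ω} Q(x,y)·(max(f(x) − f(y), 0))². -/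
/-! The pointwise inequality `(eᵃ - eᵇ)(a - b) ≤ eᵃ (a - b)₊² + eᵇ (b - a)₊²`
(`exp_sub_mul_sub_le`, a form of `1 + t ≤ eᵗ`) bounds each summand of the Dirichlet form.
Since `ν x * Q x y` is symmetric in `x` and `y`, both terms on the right have the same sum
over all pairs, which cancels the factor `1/2` and leaves
`γ² ∑ x, ν x * e^{γ f x} * ∑ y, Q x y * (f x - f y)₊²`; the inner sum is at most `v₁(f)`. -/

open Finset

noncomputable section
attribute [local instance] Classical.propDecidable

/-- Dirichlet form `𝓔_Q(f,g) = (1/2) Σ_{x,y} ν(x) Q(x,y) (f(x)−f(y))(g(x)−g(y))`. -/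
def dirichletForm {Ω : Type*} [Fintype Ω] (ν : Ω → ℝ) (Q : Ω → Ω → ℝ)
    (f g : Ω → ℝ) : ℝ :=
  (∑ x, ∑ y, ν x * Q x y * (f x - f y) * (g x - g y)) / 2

/-- `v₁(f) = max_x Σ_y Q(x,y) (f(x) − f(y))₊²`. -/
def vOne {Ω : Type*} [Fintype Ω] [Nonempty Ω] (Q : Ω → Ω → ℝ) (f : Ω → ℝ) : ℝ :=
  univ.sup' univ_nonempty (fun x => ∑ y, Q x y * max (f x - f y) 0 ^ 2)

theorem exp_sub_mul_sub_le_of_le {a b : ℝ} (h : b ≤ a) :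
    (Real.exp a - Real.exp b) * (a - b) ≤ Real.exp a * (a - b) ^ 2 := by
  have h1 : Real.exp b = Real.exp a * Real.exp (b - a) := by
    rw [← Real.exp_add]; congr 1; ring
  have h2 := mul_le_mul_of_nonneg_left (Real.add_one_le_exp (b - a)) (Real.exp_pos a).le
  have h3 : Real.exp a - Real.exp b ≤ Real.exp a * (a - b) := by
    rw [h1]; linarith
  nlinarith [mul_le_mul_of_nonneg_right h3 (sub_nonneg.2 h)]

theorem exp_sub_mul_sub_le (a b : ℝ) :
    (Real.exp a - Real.exp b) * (a - b) ≤
      Real.exp a * max (a - b) 0 ^ 2 + Real.exp b * max (b - a) 0 ^ 2 := by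
  rcases le_total b a with h | h
  · rw [max_eq_left (sub_nonneg.2 h), max_eq_right (sub_nonpos.2 h)]
    linarith [exp_sub_mul_sub_le_of_le h]
  · rw [max_eq_right (sub_nonpos.2 h), max_eq_left (sub_nonneg.2 h)]
    linarith [exp_sub_mul_sub_le_of_le h]

/-- Bound on the Dirichlet form `𝓔_Q(e^{γf}, γf)` in terms of
`v₁(f)` for a reversible chain. -/
theorem dirichlet_exp_bound_vone {Ω : Type*} [Fintype Ω] [Nonempty Ω]
    (Q : Ω → Ω → ℝ) (ν : Ω → ℝ)
    (hQ₀ : ∀ x y, 0 ≤ Q x y) (hQ₁ : ∀ x, ∑ y, Q x y = 1)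
    (hν₀ : ∀ x, 0 ≤ ν x) (hν₁ : ∑ x, ν x = 1)
    (hrev : ∀ x y, ν x * Q x y = ν y * Q y x)
    (f : Ω → ℝ) (γ : ℝ) (hγ : 0 ≤ γ) :
    dirichletForm ν Q (fun x => Real.exp (γ * f x)) (fun x => γ * f x) ≤
      γ ^ 2 * vOne Q f * expect ν (fun x => Real.exp (γ * f x)) := by
  have hmax : ∀ x y, max (γ * f x - γ * f y) 0 = γ * max (f x - f y) 0 := fun x y => by
    rw [mul_max_of_nonneg _ _ hγ, mul_sub, mul_zero]
  set T : Ω → Ω → ℝ := fun x y =>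
    ν x * Q x y * (Real.exp (γ * f x) * (γ * max (f x - f y) 0) ^ 2) with hT
  have hpt : ∀ x y, ν x * Q x y * (Real.exp (γ * f x) - Real.exp (γ * f y)) *
      (γ * f x - γ * f y) ≤ T x y + T y x := fun x y => by
    have h := mul_le_mul_of_nonneg_left (exp_sub_mul_sub_le (γ * f x) (γ * f y))
      (mul_nonneg (hν₀ x) (hQ₀ x y))
    rw [hmax, hmax] at h
    simp only [hT]
    rw [← hrev x y]
    linarith
  have hsum : dirichletForm ν Q (fun x => Real.exp (γ * f x)) (fun x => γ * f x) ≤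
      ∑ x, ∑ y, T x y := by
    have h := Finset.sum_le_sum fun x (_ : x ∈ univ) =>
      Finset.sum_le_sum fun y (_ : y ∈ univ) => hpt x y
    simp only [Finset.sum_add_distrib] at h
    rw [Finset.sum_comm (f := fun x y => T y x)] at h
    unfold dirichletForm
    linarith
  refine hsum.trans ?_
  unfold _root_.expect
  rw [Finset.mul_sum]
  refine Finset.sum_le_sum fun x _ => ?_
  have hv : ∑ y, Q x y * max (f x - f y) 0 ^ 2 ≤ vOne Q f :=
    Finset.le_sup' (fun x => ∑ y, Q x y * max (f x - f y) 0 ^ 2) (mem_univ x)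
  calc ∑ y, T x y
      = γ ^ 2 * (ν x * Real.exp (γ * f x)) * ∑ y, Q x y * max (f x - f y) 0 ^ 2 := by
        rw [Finset.mul_sum]
        exact Finset.sum_congr rfl fun y _ => by simp only [hT]; ring
    _ ≤ γ ^ 2 * (ν x * Real.exp (γ * f x)) * vOne Q f :=
        mul_le_mul_of_nonneg_left hv
          (mul_nonneg (sq_nonneg γ) (mul_nonneg (hν₀ x) (Real.exp_pos _).le))
    _ = γ ^ 2 * vOne Q f * (ν x * Real.exp (γ * f x)) := by ring
end
end

section
/- Let Q be a row-stochastic matrix on a finite set Ω, reversible with respect to a probability distribution ν (i.e., ν(x)Q(x,y) = ν(y)Q(y,x) for all x,y). Let κ ≥ 0 and let f : Ω → ℝ be such that f(y) − f(x) ≤ κ whenever Q(x,y) > 0, and let γ ≥ 0. Then 𝓔_Q(e^{γf}, γf) ≤ e^{γκ}·γ²·v₂(f)·E_ν[e^{γf}], where v₂(f) := max_{x∈Ω} Σ_{y∈Ω} Q(x,y)·(max(f(y) − f(x), 0))². -/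
/-!
Each edge contributes `ν x Q(x,y) (e^{γ f x} - e^{γ f y})(γ f x - γ f y)`, which is symmetric in
`x, y`. Orienting the edge so that `f` increases by `d ≥ 0` from its lower end `z`, the elementary
bound `e^t - 1 ≤ t e^t` with `t = γ d ≤ γ κ` bounds the factor after `ν x Q(x,y)` by
`e^{γκ} γ² d² e^{γ f z}` (`exp_edge_bound`). By reversibility the edges oriented upwards and
downwards have the same total weighted sum, which cancels the factor `1/2`; the sum over `y` is then at
most `v₂(f)`, and the remaining sum over `x` is the mean of `e^{γ f}`.
-/

open Finset

noncomputable section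
attribute [local instance] Classical.propDecidable

/-- `v₂(f) = max_x Σ_y Q(x,y) (f(y) − f(x))₊²`. -/
def vTwo {Ω : Type*} [Fintype Ω] [Nonempty Ω] (Q : Ω → Ω → ℝ) (f : Ω → ℝ) : ℝ :=
  univ.sup' univ_nonempty (fun x => ∑ y, Q x y * max (f y - f x) 0 ^ 2)

/-- The contribution of an edge whose lower end has value `a` and upper end value `b`. -/
lemma exp_edge_bound {γ κ a b : ℝ} (hγ : 0 ≤ γ) (hab : a ≤ b) (hκ : b - a ≤ κ) :
    (Real.exp (γ * b) - Real.exp (γ * a)) * (γ * b - γ * a) ≤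
      Real.exp (γ * κ) * γ ^ 2 * (Real.exp (γ * a) * (b - a) ^ 2) := by
  have ht : 0 ≤ γ * (b - a) := mul_nonneg hγ (sub_nonneg.2 hab)
  have hmono : Real.exp (γ * (b - a)) ≤ Real.exp (γ * κ) :=
    Real.exp_le_exp.2 (mul_le_mul_of_nonneg_left hκ hγ)
  have hexp : Real.exp (γ * b) = Real.exp (γ * a) * Real.exp (γ * (b - a)) := by
    rw [← Real.exp_add]; ring_nf
  -- `1 - t ≤ e^{-t}`, multiplied by `e^t`
  have hone : Real.exp (γ * (b - a)) - 1 ≤ γ * (b - a) * Real.exp (γ * (b - a)) := by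
    have h1 := Real.add_one_le_exp (-(γ * (b - a)))
    have h2 := mul_le_mul_of_nonneg_right h1 (Real.exp_pos (γ * (b - a))).le
    rw [← Real.exp_add, neg_add_cancel, Real.exp_zero] at h2
    linarith
  have hbound : Real.exp (γ * (b - a)) - 1 ≤ γ * (b - a) * Real.exp (γ * κ) :=
    hone.trans (mul_le_mul_of_nonneg_left hmono ht)
  calc (Real.exp (γ * b) - Real.exp (γ * a)) * (γ * b - γ * a)
      = Real.exp (γ * a) * (γ * (b - a)) * (Real.exp (γ * (b - a)) - 1) := by
        rw [hexp]; ring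
    _ ≤ Real.exp (γ * a) * (γ * (b - a)) * (γ * (b - a) * Real.exp (γ * κ)) :=
        mul_le_mul_of_nonneg_left hbound (mul_nonneg (Real.exp_pos _).le ht)
    _ = _ := by ring

/-- Bound on the Dirichlet form `𝓔_Q(e^{γf}, γf)` in terms of
`v₂(f)` for a reversible chain whose moves increase `f` by at most `κ`. -/
theorem dirichlet_exp_bound_vtwo {Ω : Type*} [Fintype Ω] [Nonempty Ω]
    (Q : Ω → Ω → ℝ) (ν : Ω → ℝ)
    (hQ₀ : ∀ x y, 0 ≤ Q x y) (hQ₁ : ∀ x, ∑ y, Q x y = 1)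
    (hν₀ : ∀ x, 0 ≤ ν x) (hν₁ : ∑ x, ν x = 1)
    (hrev : ∀ x y, ν x * Q x y = ν y * Q y x)
    (κ : ℝ) (hκ : 0 ≤ κ) (f : Ω → ℝ)
    (hLip : ∀ x y, 0 < Q x y → f y - f x ≤ κ)
    (γ : ℝ) (hγ : 0 ≤ γ) :
    dirichletForm ν Q (fun x => Real.exp (γ * f x)) (fun x => γ * f x) ≤
      Real.exp (γ * κ) * γ ^ 2 * vTwo Q f *
        expect ν (fun x => Real.exp (γ * f x)) := by
  set C := Real.exp (γ * κ) * γ ^ 2 with hC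
  have hC₀ : 0 ≤ C := by positivity
  let W : Ω → Ω → ℝ := fun x y =>
    ν x * Q x y * (Real.exp (γ * f x) * max (f y - f x) 0 ^ 2)
  have hedge : ∀ x y, ν x * Q x y * (Real.exp (γ * f x) - Real.exp (γ * f y)) *
      (γ * f x - γ * f y) ≤ C * (W x y + W y x) := by
    intro x y
    have hW : W y x = ν x * Q x y * (Real.exp (γ * f y) * max (f x - f y) 0 ^ 2) := by
      simp only [W, hrev x y]
    rw [hW]
    rcases (mul_nonneg (hν₀ x) (hQ₀ x y)).eq_or_lt with h0 | hpos
    · simp [W, ← h0]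
    · have hxy : 0 < Q x y := pos_of_mul_pos_right hpos (hν₀ x)
      -- reversibility makes the reversed edge admissible as well
      have hyx : 0 < Q y x := pos_of_mul_pos_right (hrev x y ▸ hpos) (hν₀ y)
      rcases le_total (f x) (f y) with h | h
      · have := mul_le_mul_of_nonneg_left (exp_edge_bound hγ h (hLip x y hxy)) hpos.le
        simp only [W, max_eq_left (sub_nonneg.2 h), max_eq_right (sub_nonpos.2 h)]
        linarith
      · have := mul_le_mul_of_nonneg_left (exp_edge_bound hγ h (hLip y x hyx)) hpos.le
        simp only [W, max_eq_left (sub_nonneg.2 h), max_eq_right (sub_nonpos.2 h)]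
        linarith
  have hsum : ∑ x, ∑ y, W x y ≤ vTwo Q f * expect ν (fun x => Real.exp (γ * f x)) := by
    rw [_root_.expect, mul_sum]
    refine sum_le_sum fun x _ => ?_
    have hv : ∑ y, Q x y * max (f y - f x) 0 ^ 2 ≤ vTwo Q f :=
      le_sup' (fun x => ∑ y, Q x y * max (f y - f x) 0 ^ 2) (mem_univ x)
    calc ∑ y, W x y
        = (∑ y, Q x y * max (f y - f x) 0 ^ 2) * (ν x * Real.exp (γ * f x)) := by
          rw [sum_mul]
          exact sum_congr rfl fun y _ => by simp only [W]; ring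
      _ ≤ _ := mul_le_mul_of_nonneg_right hv (mul_nonneg (hν₀ x) (Real.exp_pos _).le)
  have htotal : ∑ x, ∑ y, C * (W x y + W y x) = 2 * (C * ∑ x, ∑ y, W x y) := by
    simp only [← mul_sum, sum_add_distrib]
    rw [sum_comm (f := fun x y => W y x)]
    ring
  have hle := (sum_le_sum fun x (_ : x ∈ univ) =>
    sum_le_sum fun y (_ : y ∈ univ) => hedge x y).trans_eq htotal
  have hfin := mul_le_mul_of_nonneg_left hsum hC₀
  simp only [dirichletForm]
  linarith
end
end
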